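/- Let G be a finite undirected multigraph and A an Abelian group. The Abelian group B(V,A) of all balanceable functions g:V→A is isomorphic to A^{con₃(G)} × (2A)^{|V|−con₃(G)}, where con₃(G) is the number of 3-edge-connected equivalence classes of vertices and 2A is the image of the doubling map a↦2a on A. -/

import Mathlib

open Finset

/-- A finite undirected multigraph: each edge `e : E` has an unordered pair of
endpoints `ends e : Sym2 V`.  Loops and parallel edges are allowed and the graph
need not be connected. -/
structure Multigraph (V E : Type*) where
  ends : E → Sym2 V

namespace Multigraph

variable {V E : Type*}

/-- `G.IsChain x y p` : `p` is an alternating sequence `v₁,e₁,…,vₙ,eₙ` (encoded as a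
list of vertex-edge pairs) which forms a walk from `x` to `y` (the final vertex `y`
is omitted, i.e. this is "truncated"). -/
def IsChain (G : Multigraph V E) : V → V → List (V × E) → Prop
  | x, y, [] => x = y
  | x, y, (v, e) :: rest => v = x ∧ ∃ w, G.ends e = s(x, w) ∧ G.IsChain w y rest

/-- A truncated trail (ttrail) from `x` to `y`: an alternating walk with no repeated
edges, final vertex omitted. -/
def IsTtrail (G : Multigraph V E) (x y : V) (p : List (V × E)) : Prop :=
  G.IsChain x y p ∧ (p.map Prod.snd).Nodup

/-- A cycle: a closed ttrail with no repeated vertices. -/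
def IsCycle (G : Multigraph V E) (x : V) (p : List (V × E)) : Prop :=
  G.IsTtrail x x p ∧ (p.map Prod.fst).Nodup

/-- Two ttrails are edge-disjoint if they have no common edges. -/
def EdgeDisjoint (p q : List (V × E)) : Prop :=
  ∀ e, e ∈ p.map Prod.snd → e ∉ q.map Prod.snd

/-- `k`-edge-connectivity: two distinct vertices are `k`-edge-connected if there are
`k` pairwise edge-disjoint ttrails between them; every vertex is `k`-edge-connected
to itself. -/
def KConn (G : Multigraph V E) (k : ℕ) (v w : V) : Prop :=
  v = w ∨ ∃ p : Fin k → List (V × E),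
    (∀ i, G.IsTtrail v w (p i)) ∧ ∀ i j, i ≠ j → EdgeDisjoint (p i) (p j)

/-- `conk G k` : the number of equivalence classes of `k`-edge-connected vertices. -/
noncomputable def conk (G : Multigraph V E) (k : ℕ) : ℕ :=
  Nat.card (Quotient (Relation.EqvGen.setoid (G.KConn k)))

/-- The number of connected components of `G`. -/
noncomputable def con (G : Multigraph V E) : ℕ := G.conk 1

section Homology

variable [Fintype V] [Fintype E] [DecidableEq V] [DecidableEq E]

/-- The vector in `F₂^V` which is the sum of the two endpoints of the edge `e`
(so a loop is sent to `0`). -/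
def edgeVec (G : Multigraph V E) (e : E) : V → ZMod 2 := fun v =>
  Sym2.lift ⟨fun a b => (if v = a then (1 : ZMod 2) else 0) + (if v = b then 1 else 0),
    fun _ _ => add_comm _ _⟩ (G.ends e)

/-- The boundary map `δ : F₂^E → F₂^V`, sending each edge to the sum of its two
adjacent vertices. -/
def boundary (G : Multigraph V E) : (E → ZMod 2) →ₗ[ZMod 2] (V → ZMod 2) where
  toFun c := fun v => ∑ e, c e * G.edgeVec e v
  map_add' c d := by
    funext v
    simp [add_mul, Finset.sum_add_distrib]
  map_smul' r c := by
    funext v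
    simp [Finset.mul_sum, mul_assoc]

/-- The Cycle Space of `G` : the kernel of the boundary map. -/
def cycleSpace (G : Multigraph V E) : Submodule (ZMod 2) (E → ZMod 2) :=
  LinearMap.ker G.boundary

/-- The indicator vector of a vertex in `F₂^V`. -/
def vert (v : V) : V → ZMod 2 := fun w => if w = v then 1 else 0

/-- A `k`-weak homological cycle: a homological path between two `k`-edge-connected
vertices. -/
def IsWeakCycle (G : Multigraph V E) (k : ℕ) (c : E → ZMod 2) : Prop :=
  ∃ v w, G.KConn k v w ∧ G.boundary c = vert v + vert w

/-- The `k`-Weak Cycle Space: the span of all `k`-weak homological cycles. -/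
def weakCycleSpace (G : Multigraph V E) (k : ℕ) : Submodule (ZMod 2) (E → ZMod 2) :=
  Submodule.span (ZMod 2) {c | G.IsWeakCycle k c}

/-- `eps p` : the set of edges of the ttrail `p`, as a vector in `F₂^E`. -/
def eps (p : List (V × E)) : E → ZMod 2 := fun e => if e ∈ p.map Prod.snd then 1 else 0

/-- The `F₂`-linear extension of `f : E → A` to subsets of `E`: the sum of `f` over
the edges of the subset `S`. -/
def fSum {A : Type*} [AddCommGroup A] (f : E → A) (S : E → ZMod 2) : A :=
  ∑ e ∈ Finset.univ.filter fun e => S e = 1, f e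

end Homology

section Balanced

variable {A : Type*} [AddCommGroup A]

/-- The sum `g(v₁)+f(e₁)+…+g(vₙ)+f(eₙ)` of the values of a vertex-function `g` and an
edge-function `f` along a ttrail `v₁,e₁,…,vₙ,eₙ`. -/
def pathSum (g : V → A) (f : E → A) (p : List (V × E)) : A :=
  (p.map fun ve => g ve.1 + f ve.2).sum

/-- The sum `h(v₁)+h(e₁)+…+h(vₙ)+h(eₙ)` of the values of `h : V ∪ E → A` along a
ttrail `v₁,e₁,…,vₙ,eₙ`. -/
def wSum (h : V ⊕ E → A) (p : List (V × E)) : A :=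
  (p.map fun ve => h (Sum.inl ve.1) + h (Sum.inr ve.2)).sum

lemma pathSum_cons (g : V → A) (f : E → A) (a : V × E) (t : List (V × E)) :
    pathSum g f (a :: t) = (g a.1 + f a.2) + pathSum g f t := by
  simp [pathSum]

lemma pathSum_zero (p : List (V × E)) : pathSum (0 : V → A) (0 : E → A) p = 0 := by
  induction p with
  | nil => simp [pathSum]
  | cons a t ih => simp [pathSum_cons, ih]

lemma pathSum_add (g g' : V → A) (f f' : E → A) (p : List (V × E)) :
    pathSum (g + g') (f + f') p = pathSum g f p + pathSum g' f' p := by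
  induction p with
  | nil => simp [pathSum]
  | cons a t ih => simp only [pathSum_cons, Pi.add_apply, ih]; abel

lemma pathSum_neg (g : V → A) (f : E → A) (p : List (V × E)) :
    pathSum (-g) (-f) p = -pathSum g f p := by
  induction p with
  | nil => simp [pathSum]
  | cons a t ih => simp only [pathSum_cons, Pi.neg_apply, ih]; abel

lemma wSum_cons (h : V ⊕ E → A) (a : V × E) (t : List (V × E)) :
    wSum h (a :: t) = (h (Sum.inl a.1) + h (Sum.inr a.2)) + wSum h t := by
  simp [wSum]

lemma wSum_zero (p : List (V × E)) : wSum (0 : V ⊕ E → A) p = 0 := by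
  induction p with
  | nil => simp [wSum]
  | cons a t ih => simp [wSum_cons, ih]

lemma wSum_add (h h' : V ⊕ E → A) (p : List (V × E)) :
    wSum (h + h') p = wSum h p + wSum h' p := by
  induction p with
  | nil => simp [wSum]
  | cons a t ih => simp only [wSum_cons, Pi.add_apply, ih]; abel

lemma wSum_neg (h : V ⊕ E → A) (p : List (V × E)) :
    wSum (-h) p = -wSum h p := by
  induction p with
  | nil => simp [wSum]
  | cons a t ih => simp only [wSum_cons, Pi.neg_apply, ih]; abel

/-- A function `f : E → A` is balanced if the sum of its values along every closed
ttrail of `G` is zero. -/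
def BalancedE (G : Multigraph V E) (f : E → A) : Prop :=
  ∀ x p, G.IsTtrail x x p → pathSum (0 : V → A) f p = 0

/-- A function `g : V → A` is balanceable if some `f : E → A` balances it, i.e. the
sum of the values of `g` and `f` along every closed ttrail of `G` is zero. -/
def Balanceable (G : Multigraph V E) (g : V → A) : Prop :=
  ∃ f : E → A, ∀ x p, G.IsTtrail x x p → pathSum g f p = 0

/-- A function `h : V ∪ E → A` is balanced if the sum of its values along every
closed ttrail of `G` is zero. -/
def BalancedW (G : Multigraph V E) (h : V ⊕ E → A) : Prop :=
  ∀ x p, G.IsTtrail x x p → wSum h p = 0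

/-- `H(E,A)` : the group of balanced functions from `E` to `A`. -/
def Hgroup (G : Multigraph V E) (A : Type*) [AddCommGroup A] : AddSubgroup (E → A) where
  carrier := {f | G.BalancedE f}
  zero_mem' := fun _ p _ => pathSum_zero p
  add_mem' := by
    intro f f' hf hf' x p hp
    have h := pathSum_add (0 : V → A) 0 f f' p
    rw [add_zero] at h
    rw [h, hf x p hp, hf' x p hp, add_zero]
  neg_mem' := by
    intro f hf x p hp
    have h := pathSum_neg (0 : V → A) f p
    rw [neg_zero] at h
    rw [h, hf x p hp, neg_zero]

/-- `B(V,A)` : the group of balanceable functions from `V` to `A`. -/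
def Bgroup (G : Multigraph V E) (A : Type*) [AddCommGroup A] : AddSubgroup (V → A) where
  carrier := {g | G.Balanceable g}
  zero_mem' := ⟨0, fun _ p _ => pathSum_zero p⟩
  add_mem' := by
    rintro g g' ⟨f, hf⟩ ⟨f', hf'⟩
    exact ⟨f + f', fun x p hp => by rw [pathSum_add, hf x p hp, hf' x p hp, add_zero]⟩
  neg_mem' := by
    rintro g ⟨f, hf⟩
    exact ⟨-f, fun x p hp => by rw [pathSum_neg, hf x p hp, neg_zero]⟩

/-- `W(V ∪ E, A)` : the group of balanced functions from `V ∪ E` to `A`. -/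
def Wgroup (G : Multigraph V E) (A : Type*) [AddCommGroup A] : AddSubgroup (V ⊕ E → A) where
  carrier := {h | G.BalancedW h}
  zero_mem' := fun _ p _ => wSum_zero p
  add_mem' := by
    intro h h' hh hh' x p hp
    rw [wSum_add, hh x p hp, hh' x p hp, add_zero]
  neg_mem' := by
    intro h hh x p hp
    rw [wSum_neg, hh x p hp, neg_zero]

end Balanced

/-- A `3`-weakly closed ttrail (a ttrail between `3`-edge-connected vertices) which is
short: no inner vertex is `3`-edge-connected to the initial vertex. -/
def ShortW (G : Multigraph V E) (x y : V) (p : List (V × E)) : Prop :=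
  G.IsTtrail x y p ∧ G.KConn 3 x y ∧ ∀ v ∈ (p.map Prod.fst).tail, ¬ G.KConn 3 v x

/-- `G.ShortChain x y L` : `L` is a list of nontrivial short `3`-weakly closed ttrails
which concatenate into a ttrail from `x` to `y`. -/
def ShortChain (G : Multigraph V E) : V → V → List (List (V × E)) → Prop
  | x, y, [] => x = y
  | x, y, s :: rest => s ≠ [] ∧ ∃ z, G.ShortW x z s ∧ G.ShortChain z y rest

/-- `A₂` : the subgroup of elements of order dividing `2` in `A`. -/
def torsion2 (A : Type*) [AddCommGroup A] : AddSubgroup A where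
  carrier := {a | 2 • a = 0}
  zero_mem' := by simp
  add_mem' := by
    intro a b ha hb
    simp only [Set.mem_setOf_eq] at *
    rw [smul_add, ha, hb, add_zero]
  neg_mem' := by
    intro a ha
    simp only [Set.mem_setOf_eq] at *
    rw [smul_neg, ha, neg_zero]

/-- `2A` : the image of the doubling map `a ↦ 2a`. -/
def double2 (A : Type*) [AddCommGroup A] : AddSubgroup A where
  carrier := {b | ∃ a, b = 2 • a}
  zero_mem' := ⟨0, by simp⟩
  add_mem' := by
    rintro a b ⟨x, rfl⟩ ⟨y, rfl⟩
    exact ⟨x + y, by rw [smul_add]⟩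
  neg_mem' := by
    rintro a ⟨x, rfl⟩
    exact ⟨-x, by rw [smul_neg]⟩

end Multigraph

namespace Multigraph

variable {V E : Type*} [Fintype V] [Fintype E] [DecidableEq V] [DecidableEq E]


set_option linter.unusedSectionVars false

lemma chain_append (G : Multigraph V E) (p q : List (V × E)) (x y : V) :
    G.IsChain x y (p ++ q) ↔ ∃ z, G.IsChain x z p ∧ G.IsChain z y q := by
  induction p generalizing x with
  | nil => simp [IsChain]
  | cons a t ih =>
    obtain ⟨v, e⟩ := a
    simp only [List.cons_append, IsChain, ih]
    constructor
    · rintro ⟨h, w, hw, z, h1, h2⟩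
      exact ⟨z, ⟨h, w, hw, h1⟩, h2⟩
    · rintro ⟨z, ⟨h, w, hw, h1⟩, h2⟩
      exact ⟨h, w, hw, z, h1, h2⟩

/-- every chain contains a trail with the same ends -/
lemma chain_to_trail (G : Multigraph V E) (p : List (V × E)) (x y : V) (hp : G.IsChain x y p) :
    ∃ q, G.IsTtrail x y q ∧ q ⊆ p := by
  induction p generalizing x with
  | nil => exact ⟨[], ⟨hp, by simp⟩, by simp⟩
  | cons a t ih =>
    obtain ⟨v, e⟩ := a
    obtain ⟨rfl, w, hw, hc⟩ := hp
    obtain ⟨q, ⟨hq, hn⟩, hs⟩ := ih w hc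
    by_cases he : e ∈ q.map Prod.snd
    · obtain ⟨⟨a, e'⟩, hm, rfl⟩ := List.mem_map.1 he
      obtain ⟨q1, q2, rfl⟩ := List.append_of_mem hm
      obtain ⟨z, h1, h2⟩ := (chain_append G _ _ _ _).1 hq
      have h2' := h2
      obtain ⟨rfl, b, hb, h3⟩ := h2
      rw [List.map_append, List.nodup_append] at hn
      simp only at hw
      rw [hb, Sym2.eq_iff] at hw
      rcases hw with ⟨rfl, rfl⟩ | ⟨rfl, rfl⟩
      · refine ⟨_, ⟨h2', hn.2.1⟩, ?_⟩
        intro u hu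
        exact List.mem_cons_of_mem _ (hs (List.mem_append_right _ hu))
      · refine ⟨_, ⟨h3, (List.nodup_cons.1 hn.2.1).2⟩, ?_⟩
        intro u hu
        exact List.mem_cons_of_mem _
          (hs (List.mem_append_right _ (List.mem_cons_of_mem _ hu)))
    · refine ⟨(v, e) :: q, ⟨⟨rfl, w, hw, hq⟩, ?_⟩, ?_⟩
      · rw [List.map_cons, List.nodup_cons]; exact ⟨he, hn⟩
      · exact List.cons_subset_cons _ hs

/-- chosen source -/
noncomputable def src (G : Multigraph V E) (e : E) : V := (Quot.out (G.ends e)).1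
/-- chosen target -/
noncomputable def tgt (G : Multigraph V E) (e : E) : V := (Quot.out (G.ends e)).2

lemma ends_eq (G : Multigraph V E) (e : E) : G.ends e = s(G.src e, G.tgt e) := by
  unfold src tgt
  exact (Quot.out_eq (G.ends e)).symm

/-- number of boundary edges -/
noncomputable def bd (G : Multigraph V E) (S : Finset V) : Finset E :=
  univ.filter fun e => ¬ (G.src e ∈ S ↔ G.tgt e ∈ S)

lemma reach_or_cut (G : Multigraph V E) (P : V → E → Prop) (v w : V) :
    (∃ p, G.IsTtrail v w p ∧ ∀ a ∈ p, P a.1 a.2) ∨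
    ∃ S : Finset V, v ∈ S ∧ w ∉ S ∧
      (∀ e, G.src e ∈ S → G.tgt e ∉ S → ¬ P (G.src e) e) ∧
      (∀ e, G.tgt e ∈ S → G.src e ∉ S → ¬ P (G.tgt e) e) := by
  classical
  by_cases h : ∃ p, G.IsChain v w p ∧ ∀ a ∈ p, P a.1 a.2
  · obtain ⟨p, hp, hP⟩ := h
    obtain ⟨q, hq, hs⟩ := chain_to_trail G p v w hp
    exact Or.inl ⟨q, hq, fun a ha => hP a (hs ha)⟩
  · right
    have key : ∀ (a b : V) (e : E), G.ends e = s(a, b) →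
        (∃ p, G.IsChain v a p ∧ ∀ a ∈ p, P a.1 a.2) → P a e →
        (∃ p, G.IsChain v b p ∧ ∀ a ∈ p, P a.1 a.2) := by
      rintro a b e he ⟨p, hp, hP⟩ hPe
      refine ⟨p ++ [(a, e)], (chain_append G _ _ _ _).2 ⟨a, hp, rfl, b, he, rfl⟩, ?_⟩
      intro c hc
      rcases List.mem_append.1 hc with hc | hc
      · exact hP c hc
      · rw [List.mem_singleton] at hc; subst hc; exact hPe
    refine ⟨univ.filter fun b => ∃ p, G.IsChain v b p ∧ ∀ a ∈ p, P a.1 a.2, ?_, ?_, ?_, ?_⟩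
    · simp only [mem_filter, mem_univ, true_and]
      exact ⟨[], rfl, by simp⟩
    · simpa only [mem_filter, mem_univ, true_and] using h
    · intro e h1 h2 h3
      simp only [mem_filter, mem_univ, true_and] at h1 h2
      exact h2 (key _ _ e (G.ends_eq e) h1 h3)
    · intro e h1 h2 h3
      simp only [mem_filter, mem_univ, true_and] at h1 h2
      exact h2 (key _ _ e ((G.ends_eq e).trans Sym2.eq_swap) h1 h3)

/-- divergence -/
noncomputable def dv (G : Multigraph V E) (x : E → ℤ) (u : V) : ℤ :=
  ∑ e, x e * ((if G.src e = u then 1 else 0) - (if G.tgt e = u then 1 else 0))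

/-- unit flow along a chain -/
noncomputable def chi (G : Multigraph V E) : List (V × E) → E → ℤ
  | [], _ => 0
  | (a, e') :: t, e => (if e' = e then (if G.src e = a then 1 else -1) else 0) + chi G t e

lemma chi_not_mem (G : Multigraph V E) (p : List (V × E)) (e : E) (h : e ∉ p.map Prod.snd) :
    G.chi p e = 0 := by
  induction p with
  | nil => rfl
  | cons a t ih =>
    obtain ⟨v, e'⟩ := a
    simp only [List.map_cons, List.mem_cons, not_or] at h
    simp only [chi, ih h.2, add_zero]
    rw [if_neg (fun h' => h.1 h'.symm)]

lemma chi_mem (G : Multigraph V E) (p : List (V × E)) (hn : (p.map Prod.snd).Nodup)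
    (a : V) (e : E) (h : (a, e) ∈ p) :
    G.chi p e = if G.src e = a then 1 else -1 := by
  induction p with
  | nil => simp at h
  | cons b t ih =>
    obtain ⟨v, e'⟩ := b
    rw [List.map_cons, List.nodup_cons] at hn
    rcases List.mem_cons.1 h with h | h
    · obtain ⟨rfl, rfl⟩ := Prod.mk.inj h
      simp only [chi, if_true]
      rw [chi_not_mem G t e hn.1, add_zero]
    · have : e' ≠ e := by
        rintro rfl
        exact hn.1 (List.mem_map.2 ⟨_, h, rfl⟩)
      simp only [chi, if_neg this, zero_add]
      exact ih hn.2 h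

lemma dv_add (G : Multigraph V E) (x y : E → ℤ) (u : V) :
    G.dv (fun e => x e + y e) u = G.dv x u + G.dv y u := by
  simp [dv, add_mul, Finset.sum_add_distrib]

lemma dv_sub (G : Multigraph V E) (x y : E → ℤ) (u : V) :
    G.dv (fun e => x e - y e) u = G.dv x u - G.dv y u := by
  simp only [dv, sub_mul, Finset.sum_sub_distrib]

lemma dv_chi (G : Multigraph V E) (p : List (V × E)) (x y : V) (hp : G.IsChain x y p) (u : V) :
    G.dv (G.chi p) u = (if x = u then 1 else 0) - (if y = u then 1 else 0) := by
  induction p generalizing x with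
  | nil =>
    obtain rfl : x = y := hp
    simp [dv, chi]
  | cons a t ih =>
    obtain ⟨v, e'⟩ := a
    obtain ⟨rfl, w, hw, hc⟩ := hp
    have : G.chi ((v, e') :: t) = fun e =>
      (if e' = e then (if G.src e = v then 1 else -1) else 0) + G.chi t e := rfl
    rw [this, dv_add, ih w hc]
    have h2 : G.dv (fun e => if e' = e then (if G.src e = v then 1 else -1) else 0) u =
        (if v = u then 1 else 0) - (if w = u then 1 else 0) := by
      unfold dv
      rw [Finset.sum_eq_single e']
      · simp only [if_true]
        rw [ends_eq, Sym2.eq_iff] at hw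
        rcases hw with ⟨h, h'⟩ | ⟨h, h'⟩
        · rw [h, h']; simp
        · rw [h, h']; by_cases hh : w = v
          · simp [hh]
          · simp [hh]
      · intro b _ hb
        simp only [if_neg (Ne.symm hb), zero_mul]
      · intro h; exact absurd (mem_univ _) h
    rw [h2]; ring

lemma sum_dv (G : Multigraph V E) (x : E → ℤ) (S : Finset V) :
    ∑ u ∈ S, G.dv x u =
      ∑ e, x e * ((if G.src e ∈ S then 1 else 0) - (if G.tgt e ∈ S then 1 else 0)) := by
  unfold dv
  rw [Finset.sum_comm]
  refine Finset.sum_congr rfl fun e _ => ?_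
  rw [← Finset.mul_sum, Finset.sum_sub_distrib]
  simp

/-- a flow of value `k` from `v` to `w` -/
def IsFlow (G : Multigraph V E) (v w : V) (k : ℤ) (x : E → ℤ) : Prop :=
  (∀ e, -1 ≤ x e ∧ x e ≤ 1) ∧
    ∀ u, G.dv x u = k * ((if v = u then 1 else 0) - (if w = u then 1 else 0))

lemma flow_cut (G : Multigraph V E) (v w : V) (k : ℤ) (x : E → ℤ) (hx : G.IsFlow v w k x)
    (S : Finset V) (hv : v ∈ S) (hw : w ∉ S) :
    ∑ e, x e * ((if G.src e ∈ S then 1 else 0) - (if G.tgt e ∈ S then 1 else 0)) = k := by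
  rw [← sum_dv, Finset.sum_congr rfl fun u _ => hx.2 u, ← Finset.mul_sum,
    Finset.sum_sub_distrib]
  simp [hv, hw]

lemma flow_augment (G : Multigraph V E) (v w : V) (k : ℤ) (x : E → ℤ) (hx : G.IsFlow v w k x)
    (hcut : ∀ S : Finset V, v ∈ S → w ∉ S → k < ((G.bd S).card : ℤ)) :
    ∃ x', G.IsFlow v w (k + 1) x' := by
  rcases reach_or_cut G (fun a e => if G.src e = a then x e < 1 else -1 < x e) v w with
    ⟨p, ⟨hp, hn⟩, hP⟩ | ⟨S, hv, hw, h1, h2⟩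
  · refine ⟨fun e => x e + G.chi p e, fun e => ?_, fun u => ?_⟩
    · have := hx.1 e
      by_cases he : e ∈ p.map Prod.snd
      · obtain ⟨⟨a, e'⟩, hm, rfl⟩ := List.mem_map.1 he
        have h3 := hP _ hm
        simp only at h3 this ⊢
        rw [chi_mem G p hn a e' hm]
        split_ifs at h3 ⊢ <;> constructor <;> omega
      · simp only [chi_not_mem G p e he]; simpa using this
    · rw [dv_add, hx.2, dv_chi G p v w hp]; ring
  · exfalso
    have h3 := flow_cut G v w k x hx S hv hw
    have h4 := hcut S hv hw
    have : ∑ e, x e * ((if G.src e ∈ S then 1 else 0) - (if G.tgt e ∈ S then 1 else 0)) =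
        ((G.bd S).card : ℤ) := by
      rw [bd, Finset.card_filter]
      push_cast
      refine Finset.sum_congr rfl fun e _ => ?_
      have hb := hx.1 e
      by_cases hs : G.src e ∈ S <;> by_cases ht : G.tgt e ∈ S
      · simp [hs, ht]
      · have := h1 e hs ht
        simp only [if_true] at this
        simp only [hs, ht]; simp; omega
      · have := h2 e ht hs
        have hne : G.src e ≠ G.tgt e := fun h => hs (h ▸ ht)
        rw [if_neg hne] at this
        simp only [hs, ht]; simp; omega
      · simp [hs, ht]
    omega

lemma flow_decomp (G : Multigraph V E) (v w : V) (k : ℕ) (x : E → ℤ)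
    (hx : G.IsFlow v w k x) :
    ∃ p : Fin k → List (V × E), (∀ i, G.IsTtrail v w (p i)) ∧
      (∀ i j, i ≠ j → EdgeDisjoint (p i) (p j)) ∧
      ∀ i, ∀ e ∈ (p i).map Prod.snd, x e ≠ 0 := by
  induction k generalizing x with
  | zero => exact ⟨fun i => i.elim0, fun i => i.elim0, fun i => i.elim0, fun i => i.elim0⟩
  | succ k ih =>
    rcases reach_or_cut G (fun a e => if G.src e = a then x e = 1 else x e = -1) v w with
      ⟨p, ⟨hp, hn⟩, hP⟩ | ⟨S, hv, hw, h1, h2⟩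
    · have hz : ∀ e ∈ p.map Prod.snd, x e ≠ 0 ∧ x e - G.chi p e = 0 := by
        intro e he
        obtain ⟨⟨a, e'⟩, hm, rfl⟩ := List.mem_map.1 he
        have h3 := hP _ hm
        simp only at h3 ⊢
        rw [chi_mem G p hn a e' hm]
        split_ifs at h3 ⊢ <;> constructor <;> omega
      have hz' : ∀ e, e ∉ p.map Prod.snd → x e - G.chi p e = x e := by
        intro e he
        rw [chi_not_mem G p e he, sub_zero]
      obtain ⟨q, hq1, hq2, hq3⟩ := ih (fun e => x e - G.chi p e) ⟨fun e => by
        by_cases he : e ∈ p.map Prod.snd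
        · simp only [(hz e he).2]; omega
        · simp only [hz' e he]; exact hx.1 e, fun u => by
        rw [dv_sub, hx.2, dv_chi G p v w hp]; push_cast; ring⟩
      have hd : ∀ i, ∀ e ∈ (q i).map Prod.snd, e ∉ p.map Prod.snd := by
        intro i e he hep
        exact hq3 i e he (hz e hep).2
      refine ⟨Fin.cons p q, ?_, ?_, ?_⟩
      · intro i
        refine Fin.cases ?_ (fun i => ?_) i
        · exact ⟨hp, hn⟩
        · exact hq1 i
      · intro i j
        refine Fin.cases ?_ (fun i => ?_) i <;> refine Fin.cases ?_ (fun j => ?_) j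
        · intro h; exact absurd rfl h
        · intro _ e he he'
          exact hd j e he' he
        · intro _ e he he'
          exact hd i e he he'
        · intro h
          exact hq2 i j (fun h' => h (by rw [h']))
      · intro i
        refine Fin.cases ?_ (fun i => ?_) i
        · intro e he; exact (hz e he).1
        · intro e he
          have := hq3 i e he
          simp only [hz' e (hd i e he)] at this
          exact this
    · exfalso
      have h3 := flow_cut G v w _ x hx S hv hw
      have : ∑ e, x e * ((if G.src e ∈ S then 1 else 0) - (if G.tgt e ∈ S then 1 else 0)) ≤ 0 := by
        refine Finset.sum_nonpos fun e _ => ?_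
        have hb := hx.1 e
        by_cases hs : G.src e ∈ S <;> by_cases ht : G.tgt e ∈ S
        · simp [hs, ht]
        · have := h1 e hs ht
          simp only [if_true] at this
          simp only [hs, ht]; simp; omega
        · have := h2 e ht hs
          have hne : G.src e ≠ G.tgt e := fun h => hs (h ▸ ht)
          rw [if_neg hne] at this
          simp only [hs, ht]; simp; omega
        · simp [hs, ht]
      push_cast at h3
      omega

lemma menger3 (G : Multigraph V E) (v w : V)
    (hcut : ∀ S : Finset V, v ∈ S → w ∉ S → 2 < (G.bd S).card) : G.KConn 3 v w := by
  have h0 : G.IsFlow v w 0 (fun _ => 0) := ⟨fun e => by simp, fun u => by simp [dv]⟩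
  obtain ⟨x1, h1⟩ := flow_augment G v w 0 _ h0 fun S a b => by have := hcut S a b; omega
  obtain ⟨x2, h2⟩ := flow_augment G v w _ _ h1 fun S a b => by have := hcut S a b; omega
  obtain ⟨x3, h3⟩ := flow_augment G v w _ _ h2 fun S a b => by have := hcut S a b; omega
  obtain ⟨p, hp, hd, _⟩ := flow_decomp G v w 3 x3 (by simpa using h3)
  exact Or.inr ⟨p, hp, hd⟩

lemma chain_deg {A : Type*} [AddCommGroup A] (G : Multigraph V E) (h : V → A)
    (p : List (V × E)) (x y : V) (hp : G.IsChain x y p) :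
    (p.map fun a => h (G.src a.2) + h (G.tgt a.2)).sum =
      2 • (p.map fun a => h a.1).sum + h y - h x := by
  induction p generalizing x with
  | nil =>
    obtain rfl : x = y := hp
    simp
  | cons a t ih =>
    obtain ⟨v, e'⟩ := a
    obtain ⟨rfl, w, hw, hc⟩ := hp
    simp only [List.map_cons, List.sum_cons, ih w hc]
    have : h (G.src e') + h (G.tgt e') = h v + h w := by
      rw [ends_eq, Sym2.eq_iff] at hw
      rcases hw with ⟨h1, h2⟩ | ⟨h1, h2⟩
      · rw [h1, h2]
      · rw [h1, h2, add_comm]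
    rw [this, smul_add, two_nsmul, two_nsmul]
    abel

lemma pathSum_eq {A : Type*} [AddCommGroup A] (g : V → A) (f : E → A) (p : List (V × E)) :
    pathSum g f p = (p.map fun a => g a.1).sum + (p.map fun a => f a.2).sum := by
  unfold pathSum
  rw [List.sum_map_add]

lemma double_mem {A : Type*} [AddCommGroup A] (G : Multigraph V E) (h : V → A) :
    (fun v => 2 • h v) ∈ G.Bgroup A := by
  refine ⟨fun e => -(h (G.src e) + h (G.tgt e)), fun x p hp => ?_⟩
  have := chain_deg G h p x x hp.1
  rw [pathSum_eq]
  have h1 : (p.map fun a => -(h (G.src a.2) + h (G.tgt a.2))).sum =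
      -(p.map fun a => (h (G.src a.2) + h (G.tgt a.2))).sum := by
    rw [List.sum_neg, List.map_map]; rfl
  have h2 : (p.map fun a => 2 • h a.1).sum = 2 • (p.map fun a => h a.1).sum := by
    rw [List.smul_sum, List.map_map]; rfl
  rw [h1, h2, this]
  abel

lemma list_ind_sum (T : Finset E) (l : List E) (hl : l.Nodup) :
    (l.map fun e => if e ∈ T then (1 : ℤ) else 0).sum = ((T ∩ l.toFinset).card : ℤ) := by
  rw [← List.sum_toFinset _ hl, Finset.sum_boole, Finset.inter_comm, Finset.filter_mem_eq_inter]

lemma exists_half (B : Finset E) (hB : B.card ≤ 2) :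
    ∃ T : Finset E, ∀ Q : Finset E, Even (B ∩ Q).card → 2 * (T ∩ Q).card = (B ∩ Q).card := by
  by_cases h : B.card = 2
  · obtain ⟨a, b, hab, rfl⟩ := Finset.card_eq_two.1 h
    refine ⟨{a}, fun Q hQ => ?_⟩
    by_cases ha : a ∈ Q <;> by_cases hb : b ∈ Q <;>
      simp [Finset.insert_inter_of_mem, Finset.insert_inter_of_notMem,
        Finset.singleton_inter_of_mem, Finset.singleton_inter_of_notMem, ha, hb, hab] at hQ ⊢
  · refine ⟨∅, fun Q hQ => ?_⟩
    have : (B ∩ Q).card ≤ B.card := Finset.card_le_card Finset.inter_subset_left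
    obtain ⟨r, hr⟩ := hQ
    simp only [Finset.empty_inter, Finset.card_empty]
    omega

/-- scaled indicator -/
def ind {A : Type*} [AddCommGroup A] (a : A) (S : Finset V) : V → A :=
  fun v => if v ∈ S then a else 0

lemma small_mem_int (G : Multigraph V E) (S : Finset V) (hS : (G.bd S).card ≤ 2) :
    ind (1 : ℤ) S ∈ G.Bgroup ℤ := by
  obtain ⟨T, hT⟩ := exists_half (G.bd S) hS
  refine ⟨fun e => -((if G.src e ∈ S ∧ G.tgt e ∈ S then 1 else 0) + if e ∈ T then 1 else 0),
    fun x p hp => ?_⟩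
  have h1 := chain_deg G (ind (1 : ℤ) S) p x x hp.1
  have h2 : (p.map fun a => ind (1 : ℤ) S (G.src a.2) + ind (1 : ℤ) S (G.tgt a.2)).sum =
      2 * (p.map fun a => if G.src a.2 ∈ S ∧ G.tgt a.2 ∈ S then (1 : ℤ) else 0).sum +
        (p.map fun a => if a.2 ∈ G.bd S then (1 : ℤ) else 0).sum := by
    rw [← List.sum_map_mul_left, ← List.sum_map_add]
    congr 1
    refine List.map_congr_left fun a _ => ?_
    by_cases hs : G.src a.2 ∈ S <;> by_cases ht : G.tgt a.2 ∈ S <;> simp [ind, bd, hs, ht]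
  have h3 : ∀ U : Finset E, (p.map fun a => if a.2 ∈ U then (1 : ℤ) else 0).sum =
      ((U ∩ (p.map Prod.snd).toFinset).card : ℤ) := by
    intro U
    rw [← list_ind_sum U _ hp.2, List.map_map]; rfl
  rw [h3] at h2
  have h4 := hT (p.map Prod.snd).toFinset (by
    rw [← Int.even_coe_nat, Int.even_iff]
    rw [h2] at h1
    simp only [smul_eq_mul, nsmul_eq_mul] at h1
    push_cast at h1
    omega)
  have h5 : (p.map fun a => -((if G.src a.2 ∈ S ∧ G.tgt a.2 ∈ S then (1 : ℤ) else 0) +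
      if a.2 ∈ T then 1 else 0)).sum =
      -((p.map fun a => if G.src a.2 ∈ S ∧ G.tgt a.2 ∈ S then (1 : ℤ) else 0).sum +
        ((T ∩ (p.map Prod.snd).toFinset).card : ℤ)) := by
    rw [← h3, ← List.sum_map_add, List.sum_neg, List.map_map]; rfl
  rw [pathSum_eq, h5]
  rw [h2] at h1
  simp only [nsmul_eq_mul] at h1
  push_cast at h1
  omega

lemma small_mem {A : Type*} [AddCommGroup A] (G : Multigraph V E) (S : Finset V)
    (hS : (G.bd S).card ≤ 2) (a : A) : ind a S ∈ G.Bgroup A := by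
  obtain ⟨f, hf⟩ := small_mem_int G S hS
  refine ⟨fun e => f e • a, fun x p hp => ?_⟩
  have : pathSum (ind a S) (fun e => f e • a) p = pathSum (ind (1 : ℤ) S) f p • a := by
    clear hp
    induction p with
    | nil => simp [pathSum]
    | cons b t ih =>
      rw [pathSum_cons, pathSum_cons, ih, add_smul, add_smul]
      congr 2
      unfold ind; split_ifs <;> simp
  rw [this, hf x p hp, zero_smul]

lemma posimod (G : Multigraph V E) (S T : Finset V) :
    (G.bd (S \ T)).card + (G.bd (T \ S)).card ≤ (G.bd S).card + (G.bd T).card := by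
  simp only [bd, Finset.card_filter, ← Finset.sum_add_distrib]
  refine Finset.sum_le_sum fun e _ => ?_
  simp only [Finset.mem_sdiff]
  by_cases h1 : G.src e ∈ S <;> by_cases h2 : G.tgt e ∈ S <;> by_cases h3 : G.src e ∈ T <;>
    by_cases h4 : G.tgt e ∈ T <;> simp [h1, h2, h3, h4]

lemma union_mem {A : Type*} [AddCommGroup A] (G : Multigraph V E) (a : A) (n : ℕ) :
    ∀ F : Finset (Finset V), (∀ S ∈ F, (G.bd S).card ≤ 2) → ∑ S ∈ F, S.card = n →
      ind a (F.biUnion id) ∈ G.Bgroup A := by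
  induction n using Nat.strong_induction_on with
  | _ n ih =>
    intro F hF hn
    by_cases hd : ∀ S ∈ F, ∀ T ∈ F, S ≠ T → Disjoint S T
    · have : ind a (F.biUnion id) = ∑ S ∈ F, ind a S := by
        funext v
        rw [Finset.sum_apply]
        by_cases hv : v ∈ F.biUnion id
        · obtain ⟨S, hS, hvS⟩ := Finset.mem_biUnion.1 hv
          rw [Finset.sum_eq_single S]
          · have hvS' : v ∈ S := hvS
            unfold ind
            rw [if_pos hv, if_pos hvS']
          · intro T hT hne
            have := hd S hS T hT (Ne.symm hne)
            exact if_neg (Finset.disjoint_left.1 this hvS)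
          · intro h; exact absurd hS h
        · unfold ind
          rw [if_neg hv]
          symm
          refine Finset.sum_eq_zero fun S hS => if_neg fun h => hv ?_
          exact Finset.mem_biUnion.2 ⟨S, hS, h⟩
      rw [this]
      exact AddSubgroup.sum_mem _ fun S hS => small_mem G S (hF S hS) a
    · push Not at hd
      have key : ∀ S ∈ F, ∀ T ∈ F, S ≠ T → ¬ Disjoint S T → (G.bd (S \ T)).card ≤ 2 →
          ind a (F.biUnion id) ∈ G.Bgroup A := by
        intro S hS T hT hne hdis hsm
        have hlt : (S \ T).card < S.card := by
          refine Finset.card_lt_card ⟨Finset.sdiff_subset, fun h => hdis ?_⟩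
          exact Finset.disjoint_left.2 fun v hv => (Finset.mem_sdiff.1 (h hv)).2
        have hsum : ∑ U ∈ insert (S \ T) (F.erase S), U.card < n := by
          have h1 : ∑ U ∈ insert (S \ T) (F.erase S), U.card ≤
              (S \ T).card + ∑ U ∈ F.erase S, U.card := by
            by_cases hm : S \ T ∈ F.erase S
            · rw [Finset.insert_eq_of_mem hm]; omega
            · rw [Finset.sum_insert hm]
          have h2 := Finset.add_sum_erase F (fun U => U.card) hS
          omega
        have hU : (insert (S \ T) (F.erase S)).biUnion id = F.biUnion id := by
          ext v
          simp only [Finset.mem_biUnion, Finset.mem_insert, Finset.mem_erase, id]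
          constructor
          · rintro ⟨U, rfl | ⟨_, hU⟩, hv⟩
            · exact ⟨S, hS, (Finset.mem_sdiff.1 hv).1⟩
            · exact ⟨U, hU, hv⟩
          · rintro ⟨U, hU, hv⟩
            by_cases hvT : v ∈ T
            · exact ⟨T, Or.inr ⟨Ne.symm hne, hT⟩, hvT⟩
            · by_cases hUS : U = S
              · subst hUS
                exact ⟨_, Or.inl rfl, Finset.mem_sdiff.2 ⟨hv, hvT⟩⟩
              · exact ⟨U, Or.inr ⟨hUS, hU⟩, hv⟩
        rw [← hU]
        refine ih _ hsum _ ?_ rfl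
        intro U hU
        rcases Finset.mem_insert.1 hU with rfl | hU
        · exact hsm
        · exact hF U (Finset.mem_of_mem_erase hU)
      obtain ⟨S, hS, T, hT, hne, hdis⟩ := hd
      have hp := posimod G S T
      have := hF S hS
      have := hF T hT
      by_cases h : (G.bd (S \ T)).card ≤ 2
      · exact key S hS T hT hne hdis h
      · exact key T hT S hS (Ne.symm hne) (fun h => hdis h.symm) (by omega)

lemma class_mem {A : Type*} [AddCommGroup A] (G : Multigraph V E) (a : A) (C : Finset V)
    (hC : ∀ v, v ∉ C → ∃ S : Finset V, v ∈ S ∧ Disjoint S C ∧ (G.bd S).card ≤ 2) :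
    ind a C ∈ G.Bgroup A := by
  have h1 : ind a (univ : Finset V) ∈ G.Bgroup A := small_mem G _ (by simp [bd]) a
  have h2 := union_mem G a _
    (univ.filter fun S : Finset V => Disjoint S C ∧ (G.bd S).card ≤ 2)
    (fun S hS => (Finset.mem_filter.1 hS).2.2) rfl
  convert AddSubgroup.sub_mem _ h1 h2 using 1
  funext v
  simp only [ind, Pi.sub_apply, Finset.mem_univ, if_true]
  by_cases hv : v ∈ C
  · rw [if_pos hv, if_neg, sub_zero]
    intro h
    obtain ⟨S, hS, hvS⟩ := Finset.mem_biUnion.1 h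
    exact Finset.disjoint_left.1 (Finset.mem_filter.1 hS).2.1 hvS hv
  · rw [if_neg hv, if_pos, sub_self]
    obtain ⟨S, h3, h4, h5⟩ := hC v hv
    exact Finset.mem_biUnion.2 ⟨S, Finset.mem_filter.2 ⟨Finset.mem_univ _, h4, h5⟩, h3⟩

lemma chain_reverse {A : Type*} [AddCommGroup A] (G : Multigraph V E) (g : V → A) (f : E → A)
    (p : List (V × E)) (x y : V) (hp : G.IsChain x y p) :
    ∃ q, G.IsChain y x q ∧ q.map Prod.snd = (p.map Prod.snd).reverse ∧
      pathSum g f q + g x = pathSum g f p + g y := by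
  induction p generalizing x with
  | nil =>
    obtain rfl : x = y := hp
    exact ⟨[], rfl, by simp, rfl⟩
  | cons a t ih =>
    obtain ⟨v, e'⟩ := a
    obtain ⟨rfl, w, hw, hc⟩ := hp
    obtain ⟨q, h1, h2, h3⟩ := ih w hc
    refine ⟨q ++ [(w, e')], (chain_append G _ _ _ _).2
      ⟨w, h1, rfl, v, hw.trans Sym2.eq_swap, rfl⟩, by simp [h2], ?_⟩
    have : pathSum g f (q ++ [(w, e')]) = pathSum g f q + (g w + f e') := by
      simp [pathSum]
    rw [this, pathSum_cons]
    calc _ = (pathSum g f q + g w) + f e' + g v := by abel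
      _ = _ := by rw [h3]; abel

lemma two_trails {A : Type*} [AddCommGroup A] (G : Multigraph V E) (g : V → A) (f : E → A)
    (hf : ∀ x p, G.IsTtrail x x p → pathSum g f p = 0) (v w : V) (p q : List (V × E))
    (hp : G.IsTtrail v w p) (hq : G.IsTtrail v w q) (hd : EdgeDisjoint p q) :
    pathSum g f p + pathSum g f q = g v - g w := by
  obtain ⟨r, h1, h2, h3⟩ := chain_reverse G g f q v w hq.1
  have h4 := hf v (p ++ r) ⟨(chain_append G _ _ _ _).2 ⟨w, hp.1, h1⟩, by
    rw [List.map_append, h2, List.nodup_append]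
    refine ⟨hp.2, List.nodup_reverse.2 hq.2, ?_⟩
    rintro e he e' he' rfl
    exact hd e he (List.mem_reverse.1 he')⟩
  have h5 : pathSum g f (p ++ r) = pathSum g f p + pathSum g f r := by simp [pathSum]
  rw [h5] at h4
  have h6 : pathSum g f q = pathSum g f r + g v - g w := by rw [h3]; abel
  rw [h6, ← sub_eq_zero]
  rw [← h4]; abel

lemma kconn_double {A : Type*} [AddCommGroup A] (G : Multigraph V E) (g : V → A)
    (hg : g ∈ G.Bgroup A) (v w : V) (h : G.KConn 3 v w) : g v - g w ∈ double2 A := by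
  rcases h with rfl | ⟨p, hp, hd⟩
  · rw [sub_self]; exact AddSubgroup.zero_mem _
  · obtain ⟨f, hf⟩ := hg
    have h01 := two_trails G g f hf v w _ _ (hp 0) (hp 1) (hd 0 1 (by decide))
    have h02 := two_trails G g f hf v w _ _ (hp 0) (hp 2) (hd 0 2 (by decide))
    have h12 := two_trails G g f hf v w _ _ (hp 1) (hp 2) (hd 1 2 (by decide))
    have : pathSum g f (p 1) = pathSum g f (p 2) := add_left_cancel (h01.trans h02.symm)
    exact ⟨pathSum g f (p 2), by rw [← h12, this, two_nsmul]⟩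

lemma eqv_double {A : Type*} [AddCommGroup A] (G : Multigraph V E) (g : V → A)
    (hg : g ∈ G.Bgroup A) (v w : V) (h : Relation.EqvGen (G.KConn 3) v w) :
    g v - g w ∈ double2 A := by
  induction h with
  | rel x y h => exact kconn_double G g hg x y h
  | refl x => rw [sub_self]; exact AddSubgroup.zero_mem _
  | symm x y _ ih => rw [← neg_sub]; exact AddSubgroup.neg_mem _ ih
  | trans x y z _ _ ih1 ih2 =>
    rw [← sub_add_sub_cancel (g x) (g y) (g z)]; exact AddSubgroup.add_mem _ ih1 ih2

lemma bd_compl (G : Multigraph V E) (S : Finset V) : G.bd Sᶜ = G.bd S := by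
  ext e; simp only [bd, Finset.mem_filter, Finset.mem_univ, true_and, Finset.mem_compl]; tauto

lemma small_eqv (G : Multigraph V E) (S : Finset V) (hS : (G.bd S).card ≤ 2) (v w : V)
    (h : Relation.EqvGen (G.KConn 3) v w) (hv : v ∈ S) : w ∈ S := by
  obtain ⟨a, ha⟩ := eqv_double G _ (small_mem_int G S hS) v w h
  by_contra hw
  simp only [ind, if_pos hv, if_neg hw, nsmul_eq_mul] at ha
  push_cast at ha
  omega

lemma mem_Bgroup_iff {A : Type*} [AddCommGroup A] (G : Multigraph V E) (g : V → A) :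
    g ∈ G.Bgroup A ↔ ∀ v w, Relation.EqvGen (G.KConn 3) v w → g v - g w ∈ double2 A := by
  classical
  refine ⟨fun hg v w h => eqv_double G g hg v w h, fun H => ?_⟩
  let Q := Quotient (Relation.EqvGen.setoid (G.KConn 3))
  let π : V → Q := Quotient.mk _
  have hπ : ∀ v w, π v = π w ↔ Relation.EqvGen (G.KConn 3) v w := fun v w => Quotient.eq
  have hout : ∀ q : Q, π q.out = q := fun q => Quotient.out_eq q
  have hh : ∀ v, ∃ b, g v - g (π v).out = 2 • b := fun v =>
    H v _ ((hπ _ _).1 (hout (π v)).symm)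
  choose h hh using hh
  have : g = (fun v => 2 • h v) +
      ∑ q : Q, ind (g q.out) (univ.filter fun v => π v = q) := by
    funext v
    rw [Pi.add_apply, Finset.sum_apply]
    simp only [ind, Finset.mem_filter, Finset.mem_univ, true_and]
    rw [Finset.sum_ite_eq, if_pos (Finset.mem_univ _), ← hh]
    abel
  rw [this]
  refine AddSubgroup.add_mem _ (double_mem G h) (AddSubgroup.sum_mem _ fun q _ => ?_)
  refine class_mem G _ _ fun v hv => ?_
  simp only [Finset.mem_filter, Finset.mem_univ, true_and] at hv
  have hnk : ¬ G.KConn 3 v q.out := fun hk =>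
    hv (((hπ _ _).2 (Relation.EqvGen.rel _ _ hk)).trans (hout q))
  have : ∃ S : Finset V, v ∈ S ∧ q.out ∉ S ∧ (G.bd S).card ≤ 2 := by
    by_contra hno
    push Not at hno
    exact hnk (menger3 G _ _ fun S h1 h2 => hno S h1 h2)
  obtain ⟨S, h1, h2, h3⟩ := this
  refine ⟨S, h1, Finset.disjoint_left.2 fun u hu hu' => h2 ?_, h3⟩
  simp only [Finset.mem_filter, Finset.mem_univ, true_and] at hu'
  exact small_eqv G S h3 u _ ((hπ _ _).1 (hu'.trans (hout q).symm)) hu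

theorem stmt15 (G : Multigraph V E) (A : Type*) [AddCommGroup A] :
    Nonempty ((G.Bgroup A) ≃+
      ((Fin (G.conk 3) → A) ×
        (Fin (Fintype.card V - G.conk 3) → double2 A))) := by
  classical
  let Q := Quotient (Relation.EqvGen.setoid (G.KConn 3))
  let π : V → Q := Quotient.mk _
  have hπ : ∀ v w, π v = π w ↔ Relation.EqvGen (G.KConn 3) v w := fun v w => Quotient.eq
  have hout : ∀ q : Q, π q.out = q := fun q => Quotient.out_eq q
  have hcQ : Fintype.card Q = G.conk 3 := by
    rw [← Nat.card_eq_fintype_card]; rfl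
  let R := {v : V // ¬ (π v).out = v}
  have hcR : Fintype.card R = Fintype.card V - G.conk 3 := by
    have h1 : Fintype.card R = Fintype.card V - Fintype.card {v : V // (π v).out = v} :=
      Fintype.card_subtype_compl _
    have h2 : Fintype.card {v : V // (π v).out = v} = Fintype.card Q := by
      refine Fintype.card_congr ⟨fun v => π v.1, fun q => ⟨q.out, by rw [hout]⟩, ?_, ?_⟩
      · rintro ⟨v, hv⟩
        exact Subtype.ext hv
      · intro q; exact hout q
    rw [h1, h2, hcQ]
  let eQ : Q ≃ Fin (G.conk 3) := Fintype.equivFinOfCardEq hcQ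
  let eR : R ≃ Fin (Fintype.card V - G.conk 3) := Fintype.equivFinOfCardEq hcR
  have hrel : ∀ v, Relation.EqvGen (G.KConn 3) v (π v).out := fun v =>
    (hπ _ _).1 (hout (π v)).symm
  let φ : (G.Bgroup A) →+ ((Fin (G.conk 3) → A) ×
        (Fin (Fintype.card V - G.conk 3) → double2 A)) :=
    { toFun := fun g => (fun i => g.1 (eQ.symm i).out,
        fun j => ⟨g.1 (eR.symm j).1 - g.1 (π (eR.symm j).1).out,
          (mem_Bgroup_iff G g.1).1 g.2 _ _ (hrel _)⟩)
      map_zero' := by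
        ext <;> simp
      map_add' := by
        intro g g'
        ext
        · simp
        · simp only [AddSubgroup.coe_add, Pi.add_apply, Prod.snd_add]; abel }
  refine ⟨AddEquiv.ofBijective φ ⟨?_, ?_⟩⟩
  · rw [injective_iff_map_eq_zero]
    intro g hg
    have h1 : ∀ q : Q, g.1 q.out = 0 := by
      intro q
      have := congrFun (congrArg Prod.fst hg) (eQ q)
      simpa [φ] using this
    have h2 : ∀ v : R, g.1 v.1 - g.1 (π v.1).out = 0 := by
      intro v
      have := congrArg Subtype.val (congrFun (congrArg Prod.snd hg) (eR v))
      simpa [φ] using this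
    apply Subtype.ext
    funext v
    by_cases hv : (π v).out = v
    · have := h1 (π v)
      rw [hv] at this
      exact this
    · have := h2 ⟨v, hv⟩
      simp only [h1, sub_zero] at this
      exact this
  · rintro ⟨a, b⟩
    let d : V → double2 A := fun v => if hv : (π v).out = v then 0 else b (eR ⟨v, hv⟩)
    let g : V → A := fun v => a (eQ (π v)) + d v
    have hd : ∀ q : Q, d q.out = 0 := by
      intro q
      have : (π q.out).out = q.out := by rw [hout]
      simp only [d]
      rw [dif_pos this]
    have hg : g ∈ G.Bgroup A := by
      rw [mem_Bgroup_iff]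
      intro v w h
      have : g v - g w = ((d v - d w : double2 A) : A) := by
        simp only [g, (hπ v w).2 h, AddSubgroup.coe_sub]; abel
      rw [this]
      exact (d v - d w).2
    refine ⟨⟨g, hg⟩, ?_⟩
    apply Prod.ext
    · funext i
      change a (eQ (π (eQ.symm i).out)) + (d (eQ.symm i).out : A) = a i
      rw [hd, hout]; simp
    · funext j
      apply Subtype.ext
      change (a (eQ (π (eR.symm j).1)) + (d (eR.symm j).1 : A)) -
        (a (eQ (π (π (eR.symm j).1).out)) + (d (π (eR.symm j).1).out : A)) = b j
      rw [hd, hout]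
      have : d (eR.symm j).1 = b j := by
        simp only [d]
        rw [dif_neg (eR.symm j).2]
        simp
      rw [this]; simp

end Multigraph
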